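/- Let Q be a nonempty dense linear order without endpoints and let a ∈ Q. Set A = {x ∈ Q : x < a} and B = {x ∈ Q : a < x}. Then there is no definable injection from A into B, there is no definable injection from B into A, and there is no definable surjection from B onto A. (Hence Q satisfies neither of the counting-of-cardinalities principles CC1 and CC2.) -/

import Mathlib

open FirstOrder FirstOrder.Language

attribute [local instance] FirstOrder.Language.orderStructure

/-- A subset of `Q^n` is definable if it is defined by a first-order formula in the
language of orders with finitely many parameters from `Q`. -/
def DLODefinable {Q : Type*} [LinearOrder Q] {n : ℕ} (s : Set (Fin n → Q)) : Prop :=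
  ∃ A : Set Q, A.Finite ∧ A.Definable Language.order s

/-- The graph of `f` restricted to `D₁`, as a subset of `Q^(n+m)`. -/
def graphOn {Q : Type*} {n m : ℕ} (D₁ : Set (Fin n → Q))
    (f : (Fin n → Q) → (Fin m → Q)) : Set (Fin (n + m) → Q) :=
  {z | ∃ x ∈ D₁, z = Fin.append x (f x)}

/-- A definable bijection from `D₁ ⊆ Q^n` onto `D₂ ⊆ Q^m`: a bijection from `D₁` onto `D₂`
whose graph is a definable subset of `Q^(n+m)`. -/
def DefBij {Q : Type*} [LinearOrder Q] {n m : ℕ} (D₁ : Set (Fin n → Q))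
    (D₂ : Set (Fin m → Q)) : Prop :=
  ∃ f : (Fin n → Q) → (Fin m → Q), Set.BijOn f D₁ D₂ ∧ DLODefinable (graphOn D₁ f)

/-- A definable injection from `D₁ ⊆ Q^n` into `D₂ ⊆ Q^m`. -/
def DefInj {Q : Type*} [LinearOrder Q] {n m : ℕ} (D₁ : Set (Fin n → Q))
    (D₂ : Set (Fin m → Q)) : Prop :=
  ∃ f : (Fin n → Q) → (Fin m → Q),
    Set.MapsTo f D₁ D₂ ∧ Set.InjOn f D₁ ∧ DLODefinable (graphOn D₁ f)

/-- A definable surjection from `D₁ ⊆ Q^n` onto `D₂ ⊆ Q^m`. -/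
def DefSurj {Q : Type*} [LinearOrder Q] {n m : ℕ} (D₁ : Set (Fin n → Q))
    (D₂ : Set (Fin m → Q)) : Prop :=
  ∃ f : (Fin n → Q) → (Fin m → Q),
    Set.MapsTo f D₁ D₂ ∧ Set.SurjOn f D₁ D₂ ∧ DLODefinable (graphOn D₁ f)

/-- Two tuples have the same order type. -/
def SameOrd {Q ι : Type*} [LinearOrder Q] (v w : ι → Q) : Prop :=
  ∀ i j, v i ≤ v j ↔ w i ≤ w j

theorem SameOrd.symm {Q ι : Type*} [LinearOrder Q] {v w : ι → Q} (h : SameOrd v w) :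
    SameOrd w v := fun i j => (h i j).symm

theorem SameOrd.lt {Q ι : Type*} [LinearOrder Q] {v w : ι → Q} (h : SameOrd v w) (i j : ι) :
    v i < v j ↔ w i < w j := by
  rw [← not_le, ← not_le, h j i]

theorem SameOrd.extend {Q ι : Type*} [LinearOrder Q] [DenselyOrdered Q] [NoMinOrder Q]
    [NoMaxOrder Q] [Nonempty Q] [Finite ι] {v w : ι → Q} (h : SameOrd v w) (x : Q) :
    ∃ y, ∀ i, (v i ≤ x ↔ w i ≤ y) ∧ (x ≤ v i ↔ y ≤ w i) := by
  classical
  have := Fintype.ofFinite ι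
  by_cases hx : ∃ i, v i = x
  · obtain ⟨i, rfl⟩ := hx
    exact ⟨w i, fun j => ⟨h j i, h i j⟩⟩
  · push Not at hx
    obtain ⟨m, hm1, hm2⟩ := Order.exists_between_finsets
      ((Finset.univ.filter (fun i => v i < x)).image w)
      ((Finset.univ.filter (fun i => x < v i)).image w) (by
        intro a ha b hb
        simp only [Finset.mem_image, Finset.mem_filter, Finset.mem_univ, true_and] at ha hb
        obtain ⟨i, hi, rfl⟩ := ha
        obtain ⟨j, hj, rfl⟩ := hb
        exact (h.lt i j).1 (hi.trans hj))
    refine ⟨m, fun i => ?_⟩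
    rcases lt_or_gt_of_ne (hx i) with hi | hi
    · have := hm1 (w i) (Finset.mem_image_of_mem _ (by simpa using hi))
      exact ⟨iff_of_true hi.le this.le, iff_of_false hi.not_ge this.not_ge⟩
    · have := hm2 (w i) (Finset.mem_image_of_mem _ (by simpa using hi))
      exact ⟨iff_of_false hi.not_ge this.not_ge, iff_of_true hi.le this.le⟩

theorem SameOrd.snoc {Q α : Type*} [LinearOrder Q] [DenselyOrdered Q] [NoMinOrder Q]
    [NoMaxOrder Q] [Nonempty Q] [Finite α] {n : ℕ} {v w : α → Q} {xs ys : Fin n → Q}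
    (h : SameOrd (Sum.elim v xs) (Sum.elim w ys)) (x : Q) :
    ∃ y, SameOrd (Sum.elim v (Fin.snoc xs x : Fin (n + 1) → Q))
      (Sum.elim w (Fin.snoc ys y : Fin (n + 1) → Q)) := by
  obtain ⟨y, hy⟩ := h.extend x
  refine ⟨y, ?_⟩
  rintro (i | i) (j | j)
  · exact h (.inl i) (.inl j)
  · induction j using Fin.lastCases with
    | last => simpa using (hy (.inl i)).1
    | cast j => simpa using h (.inl i) (.inr j)
  · induction i using Fin.lastCases with
    | last => simpa using (hy (.inl j)).2
    | cast i => simpa using h (.inr i) (.inl j)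
  · induction i using Fin.lastCases with
    | last =>
      induction j using Fin.lastCases with
      | last => simp
      | cast j => simpa using (hy (.inr j)).2
    | cast i =>
      induction j using Fin.lastCases with
      | last => simpa using (hy (.inr i)).1
      | cast j => simpa using h (.inr i) (.inr j)

theorem order_term_eq_var {β : Type*} (t : Language.order.Term β) :
    ∃ i, t = Term.var i := by
  cases t with
  | var i => exact ⟨i, rfl⟩
  | func f _ => exact Empty.elim f

theorem realize_iff_of_sameOrd {Q α : Type*} [LinearOrder Q] [DenselyOrdered Q] [NoMinOrder Q]
    [NoMaxOrder Q] [Nonempty Q] [Finite α] {n : ℕ} (φ : Language.order.BoundedFormula α n) :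
    ∀ {v w : α → Q} {xs ys : Fin n → Q}, SameOrd (Sum.elim v xs) (Sum.elim w ys) →
      (φ.Realize v xs ↔ φ.Realize w ys) := by
  induction φ with
  | falsum => intro v w xs ys _; exact Iff.rfl
  | equal t₁ t₂ =>
    intro v w xs ys h
    obtain ⟨i, rfl⟩ := order_term_eq_var t₁
    obtain ⟨j, rfl⟩ := order_term_eq_var t₂
    simp only [BoundedFormula.Realize, Term.realize_var]
    rw [le_antisymm_iff, le_antisymm_iff, h i j, h j i]
  | rel R ts =>
    intro v w xs ys h
    cases R
    obtain ⟨i, hi⟩ := order_term_eq_var (ts 0)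
    obtain ⟨j, hj⟩ := order_term_eq_var (ts 1)
    have key : ∀ u : Fin 2 → Q, Structure.RelMap (L := Language.order) leSymb u ↔ u 0 ≤ u 1 :=
      fun _ => Iff.rfl
    refine (key _).trans (Iff.trans ?_ (key _).symm)
    simp only [hi, hj, Term.realize_var]
    exact h i j
  | imp _ _ ih₁ ih₂ =>
    intro v w xs ys h
    rw [BoundedFormula.realize_imp, BoundedFormula.realize_imp, ih₁ h, ih₂ h]
  | all _ ih =>
    intro v w xs ys h
    rw [BoundedFormula.realize_all, BoundedFormula.realize_all]
    constructor
    · intro H y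
      obtain ⟨x, hx⟩ := h.symm.snoc y
      exact (ih hx).2 (H x)
    · intro H x
      obtain ⟨y, hy⟩ := h.snoc x
      exact (ih hy).2 (H y)

theorem graph_value_mem {Q : Type*} [LinearOrder Q] [DenselyOrdered Q] [NoMinOrder Q]
    [NoMaxOrder Q] [Nonempty Q] {D : Set (Fin 1 → Q)} {f : (Fin 1 → Q) → (Fin 1 → Q)}
    (h : DLODefinable (graphOn D f)) :
    ∃ A : Set Q, A.Finite ∧ ∀ x ∈ D, f x 0 ≠ x 0 → f x 0 ∈ A := by
  classical
  obtain ⟨A, hA, hdef⟩ := h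
  refine ⟨A, hA, fun x hx hne => ?_⟩
  by_contra hnot
  rw [Set.definable_iff_exists_formula_sum] at hdef
  obtain ⟨φ, hφ⟩ := hdef
  have : Finite A := hA
  set y := f x 0 with hy
  obtain ⟨m, hm1, hm2⟩ := Order.exists_between_finsets
    ((insert (x 0) hA.toFinset).filter (· < y)) {y} (by
      intro a ha b hb
      rw [Finset.mem_singleton] at hb
      rw [hb]
      exact (Finset.mem_filter.1 ha).2)
  have hmy : m < y := hm2 y (by simp)
  have hcell : ∀ c, (c = x 0 ∨ c ∈ A) → ((c ≤ y ↔ c ≤ m) ∧ (y ≤ c ↔ m ≤ c)) := by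
    intro c hc
    have hcy : c ≠ y := by
      rintro rfl
      rcases hc with hc | hc
      · exact hne hc
      · exact hnot hc
    rcases lt_or_gt_of_ne hcy with hi | hi
    · have := hm1 c (by simp [hc, hi])
      exact ⟨iff_of_true hi.le this.le, iff_of_false hi.not_ge this.not_ge⟩
    · have := hmy.trans hi
      exact ⟨iff_of_false hi.not_ge this.not_ge, iff_of_true hi.le this.le⟩
  let p : Fin (1 + 1) → Q := Fin.append x (fun _ => y)
  let q : Fin (1 + 1) → Q := Fin.append x (fun _ => m)
  have hp0 : p 0 = x 0 := rfl
  have hp1 : p 1 = y := rfl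
  have hq0 : q 0 = x 0 := rfl
  have hq1 : q 1 = m := rfl
  have hpm : p ∈ graphOn D f := by
    refine ⟨x, hx, ?_⟩
    have : f x = fun _ => y := by
      funext i
      rw [Subsingleton.elim i 0]
    rw [this]
  have hqm : q ∉ graphOn D f := by
    rintro ⟨x', _, hq⟩
    have h0 : x 0 = x' 0 := congrFun hq 0
    have h1 : m = f x' 0 := congrFun hq 1
    have : x' = x := by
      funext i
      rw [Subsingleton.elim i 0, h0]
    rw [this] at h1
    exact hmy.ne h1
  rw [hφ] at hpm hqm
  refine hqm ((realize_iff_of_sameOrd φ ?_).1 hpm)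
  have hxc := hcell (x 0) (.inl rfl)
  rintro ((i | i) | i) ((j | j) | j)
  any_goals first | exact Fin.elim0 i | exact Fin.elim0 j | skip
  · exact Iff.rfl
  · have := hcell i (.inr i.2)
    fin_cases j
    · exact Iff.rfl
    · exact this.1
  · have := hcell j (.inr j.2)
    fin_cases i
    · exact Iff.rfl
    · exact this.2
  · fin_cases i <;> fin_cases j
    · exact Iff.rfl
    · exact hxc.1
    · exact hxc.2
    · exact iff_of_true le_rfl le_rfl

theorem infinite_below {Q : Type*} [LinearOrder Q] [NoMinOrder Q] (a : Q) :
    {x : Fin 1 → Q | x 0 < a}.Infinite := by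
  intro h
  refine Set.Iio_infinite a ((h.image (fun x => x 0)).subset ?_)
  intro x hx
  exact ⟨fun _ => x, hx, rfl⟩

theorem infinite_above {Q : Type*} [LinearOrder Q] [NoMaxOrder Q] (a : Q) :
    {x : Fin 1 → Q | a < x 0}.Infinite := by
  intro h
  refine Set.Ioi_infinite a ((h.image (fun x => x 0)).subset ?_)
  intro x hx
  exact ⟨fun _ => x, hx, rfl⟩

theorem finite_image {Q : Type*} [LinearOrder Q] [DenselyOrdered Q] [NoMinOrder Q]
    [NoMaxOrder Q] [Nonempty Q] {D : Set (Fin 1 → Q)} {f : (Fin 1 → Q) → (Fin 1 → Q)}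
    (h : DLODefinable (graphOn D f)) (hne : ∀ x ∈ D, f x 0 ≠ x 0) : (f '' D).Finite := by
  obtain ⟨A, hA, H⟩ := graph_value_mem h
  refine (hA.image (fun y => (fun _ => y : Fin 1 → Q))).subset ?_
  rintro _ ⟨x, hx, rfl⟩
  refine ⟨f x 0, H x hx (hne x hx), ?_⟩
  funext i
  rw [Subsingleton.elim i 0]

/-- For `A = (-∞, a)` and `B = (a, ∞)` in a DLO without endpoints there is no definable
injection either way and no definable surjection from `B` onto `A`; in particular the
counting-of-cardinalities principles CC1 and CC2 fail. -/
theorem dlo_CC_fails {Q : Type*} [LinearOrder Q] [DenselyOrdered Q] [NoMinOrder Q]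
    [NoMaxOrder Q] [Nonempty Q] (a : Q) :
    ¬ DefInj {x : Fin 1 → Q | x 0 < a} {x : Fin 1 → Q | a < x 0} ∧
    ¬ DefInj {x : Fin 1 → Q | a < x 0} {x : Fin 1 → Q | x 0 < a} ∧
    ¬ DefSurj {x : Fin 1 → Q | a < x 0} {x : Fin 1 → Q | x 0 < a} := by
  refine ⟨?_, ?_, ?_⟩
  · rintro ⟨f, hm, hi, hd⟩
    exact infinite_below a ((finite_image hd fun x hx =>
      (lt_trans (show x 0 < a from hx) (hm hx)).ne').of_finite_image hi)
  · rintro ⟨f, hm, hi, hd⟩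
    exact infinite_above a ((finite_image hd fun x hx =>
      (lt_trans (hm hx) (show a < x 0 from hx)).ne).of_finite_image hi)
  · rintro ⟨f, hm, hs, hd⟩
    exact infinite_below a ((finite_image hd fun x hx =>
      (lt_trans (hm hx) (show a < x 0 from hx)).ne).subset hs)
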